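/- For all n ≥ 1 and all integers m ≥ 0, the number of lattice points in the m-th dilate of P_n(123,132,312) is |m·P_n(123,132,312) ∩ ℤ^n| = (1+m)^{n−1}. -/

import Mathlib

open Pointwise

/-- `σ` contains the pattern `π`. -/
def containsPattern {n k : ℕ} (σ : Equiv.Perm (Fin n)) (π : Equiv.Perm (Fin k)) : Prop :=
  ∃ f : Fin k → Fin n, StrictMono f ∧ ∀ a b : Fin k, σ (f a) < σ (f b) ↔ π a < π b

/-- The pattern 123. -/
def p123 : Equiv.Perm (Fin 3) := 1
/-- The pattern 132. -/
def p132 : Equiv.Perm (Fin 3) := Equiv.swap 1 2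
/-- The pattern 312. -/
def p312 : Equiv.Perm (Fin 3) := (finRotate 3)⁻¹

/-- The point `(σ(1), …, σ(n)) ∈ ℝ^n` (one-based values). -/
def permPoint {n : ℕ} (σ : Equiv.Perm (Fin n)) : Fin n → ℝ := fun i => ((σ i : ℕ) : ℝ) + 1

/-- The polytope `P_n(123,132,312)`. -/
def P123132312 (n : ℕ) : Set (Fin n → ℝ) :=
  convexHull ℝ (permPoint ''
    {σ : Equiv.Perm (Fin n) |
      ¬ containsPattern σ p123 ∧ ¬ containsPattern σ p132 ∧ ¬ containsPattern σ p312})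

open Classical in
/-- Lecture hall sequences `T 0 = 0, T 1, …, T N = t`. -/
noncomputable def lhE : ℕ → ℕ → Finset (ℕ → ℕ)
  | 0, t => if t = 0 then {fun _ => 0} else ∅
  | N + 1, t => (Finset.range (N * t / (N + 1) + 1)).biUnion
      fun u => (lhE N u).image fun T => Function.update T (N + 1) t

lemma mem_lhE (N t : ℕ) (T : ℕ → ℕ) : T ∈ lhE N t ↔
    T 0 = 0 ∧ (∀ i < N, (i + 1) * T i ≤ i * T (i + 1)) ∧ T N = t ∧ ∀ i > N, T i = 0 := by
  induction N generalizing t T with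
  | zero =>
    unfold lhE
    split_ifs with h
    · subst h
      simp only [Finset.mem_singleton]
      constructor
      · rintro rfl; simp
      · rintro ⟨h0, -, -, h1⟩
        funext i
        rcases Nat.eq_zero_or_pos i with rfl | hi
        · exact h0
        · exact h1 i hi
    · simp only [Finset.notMem_empty, false_iff]
      rintro ⟨h0, -, h1, -⟩
      omega
  | succ N ih =>
    unfold lhE
    simp only [Finset.mem_biUnion, Finset.mem_range, Finset.mem_image]
    constructor
    · rintro ⟨u, hu, T', hT', rfl⟩
      rw [ih] at hT'
      obtain ⟨h0, h1, h2, h3⟩ := hT'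
      refine ⟨?_, ?_, ?_, ?_⟩
      · simp [Function.update_apply, h0]
      · intro i hi
        rcases Nat.lt_succ_iff_lt_or_eq.mp hi with hi' | rfl
        · have := h1 i hi'
          simpa [Function.update_apply, hi'.ne, (show i ≠ N + 1 by omega)] using this
        · have hu' : u ≤ i * t / (i + 1) := by omega
          rw [Nat.le_div_iff_mul_le (by omega)] at hu'
          simp [Function.update_apply, h2]
          linarith
      · simp
      · intro i hi
        have : i ≠ N + 1 := by omega
        simp only [Function.update_apply, this, if_false]
        exact h3 i (by omega)
    · rintro ⟨h0, h1, h2, h3⟩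
      refine ⟨T N, ?_, Function.update T (N + 1) 0, ?_, ?_⟩
      · have := h1 N (by omega)
        rw [h2] at this
        have : T N ≤ N * t / (N + 1) := by
          rw [Nat.le_div_iff_mul_le (by omega)]; linarith
        omega
      · rw [ih]
        refine ⟨by simp [Function.update_apply, h0], ?_, by simp [Function.update_apply], ?_⟩
        · intro i hi
          have := h1 i (by omega)
          simpa [Function.update_apply, hi.ne, (show i ≠ N + 1 by omega)] using this
        · intro i hi
          by_cases h : i = N + 1
          · simp [h]
          · simp only [Function.update_apply, h, if_false]
            exact h3 i (by omega)
      · rw [Function.update_idem, ← h2, Function.update_eq_self]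

open Classical in
lemma card_lhE_succ (N t : ℕ) :
    (lhE (N + 1) t).card = ∑ u ∈ Finset.range (N * t / (N + 1) + 1), (lhE N u).card := by
  rw [lhE, Finset.card_biUnion]
  · refine Finset.sum_congr rfl fun u _ => ?_
    apply Finset.card_image_of_injOn
    intro T hT T' hT' h
    simp only [Finset.mem_coe, mem_lhE] at hT hT'
    funext i
    by_cases hi : i = N + 1
    · rw [hT.2.2.2 i (by omega), hT'.2.2.2 i (by omega)]
    · have := congrFun h i
      simpa [Function.update_apply, hi] using this
  · intro u _ u' _ huu
    rw [Function.onFun, Finset.disjoint_left]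
    intro T h h'
    simp only [Finset.mem_image] at h h'
    obtain ⟨A, hA, rfl⟩ := h
    obtain ⟨B, hB, hAB⟩ := h'
    rw [mem_lhE] at hA hB
    have := congrFun hAB N
    simp [Function.update_apply] at this
    apply huu
    rw [← hA.2.2.1, ← hB.2.2.1, this]

lemma sum_lhE (N : ℕ) : ∀ q r : ℕ, r ≤ N →
    ∑ u ∈ Finset.range (N * q + r + 1), (lhE N u).card = (q + 1) ^ (N - r) * (q + 2) ^ r := by
  induction N with
  | zero =>
    intro q r hr
    obtain rfl : r = 0 := by omega
    simp [lhE]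
  | succ N ih =>
    intro q
    induction q with
    | zero =>
      intro r
      induction r with
      | zero =>
        intro _
        have := ih 0 0 (by omega)
        simp at this
        simp [card_lhE_succ, this]
      | succ r ihr =>
        intro hr
        rw [show (N + 1) * 0 + (r + 1) + 1 = ((N + 1) * 0 + r + 1) + 1 by ring,
          Finset.sum_range_succ, ihr (by omega), card_lhE_succ]
        have e : N * ((N + 1) * 0 + r + 1) / (N + 1) = N * 0 + r := by
          apply Nat.div_eq_of_lt_le <;> nlinarith
        rw [e, ih 0 r (by omega)]
        simp
        ring
    | succ q ihq =>
      intro r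
      induction r with
      | zero =>
        intro _
        have := ihq (N + 1) le_rfl
        rw [show (N + 1) * (q + 1) + 0 + 1 = (N + 1) * q + (N + 1) + 1 by ring, this]
        simp
      | succ r ihr =>
        intro hr
        rw [show (N + 1) * (q + 1) + (r + 1) + 1 = ((N + 1) * (q + 1) + r + 1) + 1 by ring,
          Finset.sum_range_succ, ihr (by omega), card_lhE_succ]
        have e : N * ((N + 1) * (q + 1) + r + 1) / (N + 1) = N * (q + 1) + r := by
          apply Nat.div_eq_of_lt_le <;> nlinarith
        rw [e, ih (q + 1) r (by omega), show N + 1 - r = (N - r) + 1 by omega,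
          show N + 1 - (r + 1) = N - r by omega]
        ring

lemma card_lhE_final (n m : ℕ) (hn : 1 ≤ n) : (lhE n (n * m)).card = (1 + m) ^ (n - 1) := by
  obtain ⟨N, rfl⟩ : ∃ N, n = N + 1 := ⟨n - 1, by omega⟩
  rw [card_lhE_succ]
  have e : N * ((N + 1) * m) / (N + 1) = N * m + 0 := by
    rw [show N * ((N + 1) * m) = (N * m) * (N + 1) by ring]
    simp
  rw [e, sum_lhE N m 0 (by omega)]
  simp [add_comm]

/-- values of the `k`-th avoiding permutation -/
def tauFun (n k i : ℕ) : ℕ := if i < k then n - 2 - i else if i = k then n - 1 else n - 1 - i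

lemma exists_tau (n : ℕ) (k : Fin n) :
    ∃ τ : Equiv.Perm (Fin n), ∀ i, (τ i : ℕ) = tauFun n k i := by
  have hlt : ∀ i : Fin n, tauFun n k i < n := by
    intro i
    have := i.2
    unfold tauFun
    split_ifs <;> omega
  let f : Fin n → Fin n := fun i => ⟨tauFun n k i, hlt i⟩
  have hf : Function.Injective f := by
    intro i j h
    have h' : tauFun n k i = tauFun n k j := congrArg Fin.val h
    have := i.2
    have := j.2
    have := k.2
    apply Fin.ext
    unfold tauFun at h'
    split_ifs at h' <;> omega
  exact ⟨Equiv.ofBijective f (Finite.injective_iff_bijective.mp hf), fun i => rfl⟩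

lemma perm_eq_of_lt_iff {n : ℕ} (σ τ : Equiv.Perm (Fin n))
    (h : ∀ a b, σ a < σ b ↔ τ a < τ b) : σ = τ := by
  let e : Fin n ≃o Fin n :=
    { toEquiv := τ.symm.trans σ
      map_rel_iff' := by
        intro a b
        have := h (τ.symm b) (τ.symm a)
        simp only [Equiv.apply_symm_apply] at this
        simp only [Equiv.trans_apply]
        rw [← not_lt, ← not_lt, this] }
  have he : e = OrderIso.refl _ := Subsingleton.elim _ _
  ext a
  have : e (τ a) = τ a := by rw [he]; rfl
  have h2 : e (τ a) = σ a := by simp [e]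
  rw [← h2, this]

lemma contains_of {n : ℕ} (σ : Equiv.Perm (Fin n)) (π : Equiv.Perm (Fin 3)) (a b c : Fin n)
    (hab : a < b) (hbc : b < c)
    (h : ∀ i j : Fin 3, σ (![a, b, c] i) < σ (![a, b, c] j) ↔ π i < π j) :
    containsPattern σ π := by
  refine ⟨![a, b, c], ?_, h⟩
  intro i j hij
  fin_cases i <;> fin_cases j <;> simp at hij ⊢ <;> first | assumption | exact hab.trans hbc

lemma avoid_iff {n : ℕ} (hn : 1 ≤ n) (σ : Equiv.Perm (Fin n)) :
    (¬ containsPattern σ p123 ∧ ¬ containsPattern σ p132 ∧ ¬ containsPattern σ p312) ↔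
      ∃ k : Fin n, ∀ i, (σ i : ℕ) = tauFun n k i := by
  constructor
  · rintro ⟨h1, h2, h3⟩
    let k : Fin n := σ.symm ⟨n - 1, by omega⟩
    have hk : (σ k : ℕ) = n - 1 := by simp [k]
    have hmax : ∀ i, i ≠ k → σ i < σ k := by
      intro i hi
      have h1 : σ i ≠ σ k := fun h => hi (σ.injective h)
      have h2 : (σ i : ℕ) ≠ σ k := fun h => h1 (Fin.ext h)
      have := (σ i).2
      rw [Fin.lt_def]
      omega
    have hdec : ∀ i j, i < j → i ≠ k → j ≠ k → σ j < σ i := by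
      intro i j hij hi hj
      by_contra hcon
      have hlt : σ i < σ j :=
        lt_of_le_of_ne (not_lt.mp hcon) fun h => hij.ne (σ.injective h)
      have mi := hmax i hi
      have mj := hmax j hj
      rcases lt_or_gt_of_ne hi with hik | hik
      · rcases lt_or_gt_of_ne hj with hjk | hjk
        · apply h1
          apply contains_of σ _ i j k hij hjk
          intro a b
          fin_cases a <;> fin_cases b <;> simp [p123] <;> order
        · apply h2
          apply contains_of σ _ i k j hik hjk
          intro a b
          fin_cases a <;> fin_cases b <;> simp [p132, Equiv.swap_apply_def] <;> order
      · apply h3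
        apply contains_of σ _ k i j hik hij
        have e0 : p312 0 = 2 := by decide
        have e1 : p312 1 = 0 := by decide
        have e2 : p312 2 = 1 := by decide
        intro a b
        fin_cases a <;> fin_cases b <;> simp [e0, e1, e2] <;> order
    obtain ⟨τ, hτ⟩ := exists_tau n k
    have : σ = τ := by
      have key : ∀ a b, a < b → (σ a < σ b ↔ τ a < τ b) := by
        intro a b hab
        rw [Fin.lt_def (a := τ a), hτ, hτ]
        have ha := a.2
        have hb := b.2
        have hk' := k.2
        have hab' : (a : ℕ) < b := hab
        by_cases hbk : b = k
        · have := hmax a (by rintro rfl; exact absurd hbk hab.ne')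
          rw [← hbk] at this
          simp only [this, true_iff, hbk, tauFun]
          have : (b : ℕ) = k := by rw [hbk]
          split_ifs <;> omega
        · have hbk' : (b : ℕ) ≠ k := fun h => hbk (Fin.ext h)
          have hlt : σ b < σ a := by
            by_cases hak : a = k
            · rw [hak]; exact hmax b hbk
            · exact hdec a b hab hak hbk
          simp only [not_lt_of_gt hlt, false_iff, tauFun]
          split_ifs <;> omega
      apply perm_eq_of_lt_iff
      intro a b
      rcases lt_trichotomy a b with h | rfl | h
      · exact key a b h
      · simp
      · have := key b a h
        have i1 : σ a ≠ σ b := fun e => h.ne' (σ.injective e)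
        have i2 : τ a ≠ τ b := fun e => h.ne' (τ.injective e)
        constructor
        · intro h'
          by_contra h''
          have := this.mpr (by order)
          order
        · intro h'
          by_contra h''
          have := this.mp (by order)
          order
    exact ⟨k, by rw [this]; exact hτ⟩
  · rintro ⟨k, hk⟩
    have hk' := k.2
    refine ⟨?_, ?_, ?_⟩
    · rintro ⟨f, hf, h⟩
      have f1 : f 0 < f 1 := hf (by decide)
      have f2 : f 1 < f 2 := hf (by decide)
      have a1 := (h 0 1).mpr (by decide)
      have a2 := (h 1 2).mpr (by decide)
      have := (f 2).2
      simp only [Fin.lt_def, hk, tauFun] at f1 f2 a1 a2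
      split_ifs at a1 a2 <;> omega
    · rintro ⟨f, hf, h⟩
      have f1 : f 0 < f 1 := hf (by decide)
      have f2 : f 1 < f 2 := hf (by decide)
      have a1 := (h 0 1).mpr (by decide)
      have a2 := (h 0 2).mpr (by decide)
      have := (f 2).2
      simp only [Fin.lt_def, hk, tauFun] at f1 f2 a1 a2
      split_ifs at a1 a2 <;> omega
    · rintro ⟨f, hf, h⟩
      have f1 : f 0 < f 1 := hf (by decide)
      have f2 : f 1 < f 2 := hf (by decide)
      have a1 := (h 1 2).mpr (by decide)
      have a2 := (h 2 0).mpr (by decide)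
      have := (f 2).2
      simp only [Fin.lt_def, hk, tauFun] at f1 f2 a1 a2
      split_ifs at a1 a2 <;> omega

/-- the vertices -/
noncomputable def vtx (n : ℕ) (k i : Fin n) : ℝ :=
  ((n : ℝ) - 1 - (i : ℕ)) + (if (k : ℕ) < i then 1 else 0) + (if (k : ℕ) = i then ((i : ℕ) : ℝ) + 1 else 0)

lemma tau_vtx (n : ℕ) (k i : Fin n) : (tauFun n k i : ℝ) + 1 = vtx n k i := by
  have hi := i.2
  have hk := k.2
  unfold tauFun vtx
  rcases lt_trichotomy (i : ℕ) k with h | h | h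
  · rw [if_pos h, if_neg (by omega), if_neg (by omega)]
    rw [Nat.cast_sub (by omega), Nat.cast_sub (by omega)]
    push_cast; ring
  · rw [if_neg (by omega), if_pos h, if_neg (by omega), if_pos h.symm]
    rw [Nat.cast_sub (by omega)]
    push_cast; ring
  · rw [if_neg (by omega), if_neg (by omega), if_pos h, if_neg (by omega)]
    rw [Nat.cast_sub (by omega), Nat.cast_sub (by omega)]
    push_cast; ring

lemma P_eq (n : ℕ) (hn : 1 ≤ n) : P123132312 n = convexHull ℝ (Set.range (vtx n)) := by
  unfold P123132312
  congr 1
  ext x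
  simp only [Set.mem_image, Set.mem_setOf_eq, Set.mem_range, avoid_iff hn]
  constructor
  · rintro ⟨σ, ⟨k, hk⟩, rfl⟩
    refine ⟨k, ?_⟩
    funext i
    rw [← tau_vtx, permPoint, hk]
  · rintro ⟨k, rfl⟩
    obtain ⟨τ, hτ⟩ := exists_tau n k
    refine ⟨τ, ⟨k, hτ⟩, ?_⟩
    funext i
    rw [← tau_vtx, permPoint, hτ]

lemma mem_hull_range {n : ℕ} (v : Fin n → Fin n → ℝ) (x : Fin n → ℝ) :
    x ∈ convexHull ℝ (Set.range v) ↔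
      ∃ w : Fin n → ℝ, (∀ k, 0 ≤ w k) ∧ ∑ k, w k = 1 ∧ ∑ k, w k • v k = x := by
  constructor
  · intro hx
    refine convexHull_min (t := {x | ∃ w : Fin n → ℝ, (∀ k, 0 ≤ w k) ∧ ∑ k, w k = 1 ∧
      ∑ k, w k • v k = x}) ?_ ?_ hx
    · rintro _ ⟨k, rfl⟩
      refine ⟨fun j => if j = k then 1 else 0, ?_, by simp, by simp⟩
      intro j
      simp only
      split_ifs <;> norm_num
    · rintro _ ⟨w, h0, h1, rfl⟩ _ ⟨w', h0', h1', rfl⟩ a b ha hb hab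
      refine ⟨fun k => a * w k + b * w' k, ?_, ?_, ?_⟩
      · intro k
        exact add_nonneg (mul_nonneg ha (h0 k)) (mul_nonneg hb (h0' k))
      · rw [Finset.sum_add_distrib, ← Finset.mul_sum, ← Finset.mul_sum, h1, h1', mul_one, mul_one,
          hab]
      · simp only [add_smul, mul_smul, Finset.sum_add_distrib, Finset.smul_sum]
  · rintro ⟨w, h0, h1, rfl⟩
    exact (convex_convexHull ℝ _).sum_mem (fun i _ => h0 i) h1
      fun i _ => subset_convexHull ℝ _ ⟨i, rfl⟩

lemma comb_eq (n : ℕ) (l : ℕ → ℝ) (i : Fin n) :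
    ∑ k : Fin n, l k * vtx n k i = (∑ k ∈ Finset.range n, l k) * ((n : ℝ) - 1 - (i : ℕ))
      + ((i : ℕ) + 1) * (∑ k ∈ Finset.range (i + 1), l k)
      - (i : ℕ) * (∑ k ∈ Finset.range i, l k) := by
  have h1 : ∑ k ∈ Finset.range n, (if k < (i : ℕ) then l k else 0)
      = ∑ k ∈ Finset.range i, l k := by
    rw [← Finset.sum_filter]
    congr 1
    ext k
    have := i.2
    simp
    omega
  have h2 : ∑ k ∈ Finset.range n, (if k = (i : ℕ) then l k * ((i : ℕ) + 1) else 0)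
      = l i * ((i : ℕ) + 1) := by
    rw [Finset.sum_ite_eq']
    simp
  unfold vtx
  rw [Fin.sum_univ_eq_sum_range (fun k => l k * (((n : ℝ) - 1 - (i : ℕ)) +
    (if k < (i : ℕ) then 1 else 0) + (if k = (i : ℕ) then ((i : ℕ) : ℝ) + 1 else 0))) n]
  simp only [mul_add, Finset.sum_add_distrib, mul_ite, mul_one, mul_zero]
  simp only [mul_add, mul_one] at h2
  rw [h1, h2, ← Finset.sum_mul, Finset.sum_range_succ]
  ring

lemma mem_dilate (n : ℕ) (hn : 1 ≤ n) (m : ℕ) (x : Fin n → ℝ) :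
    x ∈ (m : ℝ) • P123132312 n ↔ ∃ S : ℕ → ℝ, S 0 = 0 ∧ S n = m ∧ (∀ i < n, S i ≤ S (i + 1)) ∧
      ∀ i : Fin n, x i = m * ((n : ℝ) - 1 - (i : ℕ)) + ((i : ℕ) + 1) * S (i + 1)
        - (i : ℕ) * S i := by
  rw [P_eq n hn, Set.mem_smul_set]
  constructor
  · rintro ⟨y, hy, rfl⟩
    rw [mem_hull_range] at hy
    obtain ⟨w, h0, h1, rfl⟩ := hy
    let l : ℕ → ℝ := fun k => if h : k < n then m * w ⟨k, h⟩ else 0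
    have hl : ∀ k : Fin n, l k = m * w k := fun k => by simp [l]
    have hs : ∑ k ∈ Finset.range n, l k = m := by
      rw [← Fin.sum_univ_eq_sum_range]
      simp only [hl]
      rw [← Finset.mul_sum, h1, mul_one]
    refine ⟨fun i => ∑ k ∈ Finset.range i, l k, by simp, hs, ?_, ?_⟩
    · intro i hi
      simp only [Finset.sum_range_succ]
      have := hl ⟨i, hi⟩
      simp only at this
      rw [this]
      have := mul_nonneg (Nat.cast_nonneg (α := ℝ) m) (h0 ⟨i, hi⟩)
      linarith
    · intro i
      have := comb_eq n l i
      rw [hs] at this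
      rw [← this]
      simp only [Pi.smul_apply, Finset.sum_apply, smul_eq_mul, Finset.mul_sum, hl, mul_assoc]
  · rintro ⟨S, s0, sn, smono, hx⟩
    let l : ℕ → ℝ := fun k => S (k + 1) - S k
    have hl : ∀ i, ∑ k ∈ Finset.range i, l k = S i := by
      intro i
      simp only [l, Finset.sum_range_sub, s0, sub_zero]
    have hx' : x = ∑ k : Fin n, l k • vtx n k := by
      funext i
      simp only [Finset.sum_apply, Pi.smul_apply, smul_eq_mul]
      rw [comb_eq, hl, hl, hl, sn, hx]
    have hl0 : ∀ k : Fin n, 0 ≤ l k := fun k => sub_nonneg.mpr (smono k k.2)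
    have hsum : ∑ k : Fin n, l k = m := by
      rw [Fin.sum_univ_eq_sum_range l n, hl, sn]
    rcases Nat.eq_zero_or_pos m with rfl | hm
    · refine ⟨vtx n ⟨0, hn⟩, subset_convexHull ℝ _ ⟨_, rfl⟩, ?_⟩
      have hz : ∀ k : Fin n, l k = 0 := by
        have := (Finset.sum_eq_zero_iff_of_nonneg (fun k _ => hl0 k)).mp (by simpa using hsum)
        exact fun k => this k (Finset.mem_univ k)
      rw [hx']
      simp [hz]
    · have hm' : (m : ℝ) ≠ 0 := by positivity
      refine ⟨(m : ℝ)⁻¹ • x, ?_, by rw [smul_inv_smul₀ hm']⟩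
      rw [mem_hull_range]
      refine ⟨fun k => (m : ℝ)⁻¹ * l k, fun k => mul_nonneg (by positivity) (hl0 k), ?_, ?_⟩
      · rw [← Finset.mul_sum, hsum, inv_mul_cancel₀ hm']
      · rw [hx', Finset.smul_sum]
        simp only [mul_smul]

/-- lattice point from a lecture hall sequence -/
def toPt (n m : ℕ) (T : ℕ → ℕ) : Fin n → ℤ :=
  fun i => m * ((n : ℤ) - 1 - (i : ℕ)) + T (i + 1) - T i

lemma pts_eq (n : ℕ) (hn : 1 ≤ n) (m : ℕ) :
    {x : Fin n → ℤ | (fun i => (x i : ℝ)) ∈ (m : ℝ) • P123132312 n} =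
      toPt n m '' (lhE n (n * m) : Set (ℕ → ℕ)) := by
  ext x
  simp only [Set.mem_setOf_eq, mem_dilate n hn, Set.mem_image, Finset.mem_coe, mem_lhE]
  constructor
  · rintro ⟨S, s0, sn, smono, hx⟩
    let y : ℕ → ℤ := fun j => if h : j < n then x ⟨j, h⟩ - m * ((n : ℤ) - 1 - j) else 0
    let Z : ℕ → ℤ := fun i => ∑ j ∈ Finset.range i, y j
    have hZ : ∀ i, i ≤ n → (Z i : ℝ) = i * S i := by
      intro i
      induction i with
      | zero => intro _; simp [Z]
      | succ i ih =>
        intro hi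
        have h1 : Z (i + 1) = Z i + y i := Finset.sum_range_succ _ _
        have h2 : y i = x ⟨i, hi⟩ - m * ((n : ℤ) - 1 - i) := by simp [y, (show i < n from hi)]
        have h3 := hx ⟨i, hi⟩
        rw [h1, h2]
        push_cast
        rw [ih (by omega), h3]
        ring
    have hS : ∀ i, i ≤ n → 0 ≤ S i := by
      intro i
      induction i with
      | zero => intro _; rw [s0]
      | succ i ih => intro hi; exact (ih (by omega)).trans (smono i hi)
    have hZ0 : ∀ i, i ≤ n → 0 ≤ Z i := by
      intro i hi
      have : (0 : ℝ) ≤ Z i := by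
        rw [hZ i hi]
        exact mul_nonneg (by positivity) (hS i hi)
      exact_mod_cast this
    let T : ℕ → ℕ := fun i => if i ≤ n then (Z i).toNat else 0
    have hT : ∀ i, i ≤ n → (T i : ℤ) = Z i := by
      intro i hi
      simp only [T, hi, if_true]
      exact Int.toNat_of_nonneg (hZ0 i hi)
    have hTR : ∀ i, i ≤ n → (T i : ℝ) = i * S i := by
      intro i hi
      rw [← hZ i hi, ← hT i hi]
      simp
    refine ⟨T, ⟨?_, ?_, ?_, ?_⟩, ?_⟩
    · simp [T, Z]
    · intro i hi
      have : ((i : ℝ) + 1) * T i ≤ i * T (i + 1) := by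
        rw [hTR i hi.le, hTR (i + 1) hi]
        push_cast
        have := mul_le_mul_of_nonneg_left (smono i hi)
          (show (0 : ℝ) ≤ i * (i + 1) by positivity)
        linarith
      exact_mod_cast this
    · have := hTR n le_rfl
      rw [sn] at this
      exact_mod_cast this
    · intro i hi
      simp [T, not_le.mpr hi]
    · funext i
      have h1 : Z (i + 1) = Z i + y i := Finset.sum_range_succ _ _
      have h2 : y i = x i - m * ((n : ℤ) - 1 - (i : ℕ)) := by simp [y]
      unfold toPt
      rw [hT _ i.2, hT _ i.2.le, h1, h2]
      ring
  · rintro ⟨T, ⟨t0, t1, t2, t3⟩, rfl⟩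
    have hi : ∀ i : ℕ, (i : ℝ) * ((T i : ℝ) / i) = T i := by
      intro i
      rcases Nat.eq_zero_or_pos i with rfl | h
      · simp [t0]
      · field_simp
    refine ⟨fun i => (T i : ℝ) / i, by simp, ?_, ?_, ?_⟩
    · simp only [t2]
      have : (n : ℝ) ≠ 0 := by positivity
      push_cast
      field_simp
    · intro i hin
      rcases Nat.eq_zero_or_pos i with rfl | h
      · simp
      · rw [div_le_div_iff₀ (by positivity) (by positivity)]
        have := t1 i hin
        have : ((i : ℝ) + 1) * T i ≤ i * T (i + 1) := by exact_mod_cast this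
        push_cast
        linarith
    · intro i
      have h1 := hi i
      have h2 := hi (i + 1)
      push_cast at h2
      simp only [toPt]
      push_cast
      rw [h1, h2]

theorem stmt7 (n : ℕ) (hn : 1 ≤ n) (m : ℕ) :
    Set.ncard {x : Fin n → ℤ | (fun i => (x i : ℝ)) ∈ (m : ℝ) • P123132312 n} =
      (1 + m) ^ (n - 1) := by
  rw [pts_eq n hn, Set.ncard_image_of_injOn, Set.ncard_coe_finset, card_lhE_final n m hn]
  intro T hT T' hT' h
  simp only [Finset.mem_coe, mem_lhE] at hT hT'
  funext i
  induction i with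
  | zero => rw [hT.1, hT'.1]
  | succ i ih =>
    by_cases hi : i < n
    · have := congrFun h ⟨i, hi⟩
      simp only [toPt, ih] at this
      omega
    · rw [hT.2.2.2 _ (by omega), hT'.2.2.2 _ (by omega)]
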